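/- Let f(t) = e^{−t²/2} for t ≥ 0 and ρ(x) = (1/√(2π)) e^{−x²/2}. Then for every q > 0, (2/q) ∫₀^∞ ψ(t) ρ(q t) dt = 1/(2q√(q²+2)) − q/(q²+1)^{3/2}. -/

import Mathlib

open MeasureTheory Set Filter

/-- Gaussian satisficing kernel `f(t) = e^{-t²/2}`. -/
noncomputable def fGauss : ℝ → ℝ := fun t => Real.exp (-t^2 / 2)

/-- `ψ(t) = f''(t)(1 - f(t)/2) + (f'(t))²/2` for the Gaussian kernel. -/
noncomputable def psiGauss : ℝ → ℝ := fun t =>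
  iteratedDeriv 2 fGauss t * (1 - (1/2) * fGauss t) + (1/2) * (deriv fGauss t)^2

/-! Since `f' = -t f` and `f'' = (t² - 1) f`, the terms `t² f²` cancel and
`ψ(t) = (t² - 1) e^{-t²/2} + e^{-t²} / 2` (`psiGauss_eq`). Multiplying by `e^{-(qt)²/2}` leaves
Gaussians `e^{-ct²/2}` with `c = q² + 1` and `c = q² + 2`, so only the zeroth and second half-line
moments are needed; they are `√(2π) / (2√c)` and `√(2π) / (2c√c)`
(`integral_gauss_Ioi`, `integral_sq_gauss_Ioi`). With `c = q² + 1` these combine through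
`1 / c - 1 = -q² / c`. -/

lemma hasDerivAt_fGauss (t : ℝ) : HasDerivAt fGauss (-t * Real.exp (-t^2 / 2)) t := by
  have h : HasDerivAt (fun t : ℝ => -t^2 / 2) (-t) t :=
    ((hasDerivAt_pow 2 t).fun_neg.div_const 2).congr_deriv (by norm_num; ring)
  exact h.exp.congr_deriv (mul_comm _ _)

lemma deriv_fGauss : deriv fGauss = fun t => -t * Real.exp (-t^2 / 2) :=
  funext fun t => (hasDerivAt_fGauss t).deriv

lemma iteratedDeriv_two_fGauss (t : ℝ) :
    iteratedDeriv 2 fGauss t = (t^2 - 1) * Real.exp (-t^2 / 2) := by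
  rw [iteratedDeriv_succ, iteratedDeriv_one, deriv_fGauss]
  have h := ((hasDerivAt_id t).neg.mul (hasDerivAt_fGauss t)).deriv
  refine h.trans ?_
  simp only [fGauss, Pi.neg_apply, id]
  ring

lemma psiGauss_eq (t : ℝ) :
    psiGauss t = (t^2 - 1) * Real.exp (-t^2 / 2) + (1/2) * Real.exp (-t^2) := by
  have h : Real.exp (-t^2) = Real.exp (-t^2 / 2) ^ 2 := by
    rw [← Real.exp_nat_mul]; congr 1; push_cast; ring
  rw [psiGauss, iteratedDeriv_two_fGauss, deriv_fGauss, h]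
  simp only [fGauss]
  ring

lemma integral_gauss_Ioi {c : ℝ} (hc : 0 < c) :
    ∫ t in Ioi (0:ℝ), Real.exp (-(c/2) * t^2)
      = Real.sqrt (2 * Real.pi) / (2 * Real.sqrt c) := by
  rw [integral_gaussian_Ioi, show Real.pi / (c/2) = 2 * Real.pi / c by field_simp,
    Real.sqrt_div (by positivity)]
  field_simp

/-- The substitution `u = ct²/2` turns the second moment into `Γ(3/2) = √π / 2`. -/
lemma integral_sq_gauss_Ioi {c : ℝ} (hc : 0 < c) :
    ∫ t in Ioi (0:ℝ), t^2 * Real.exp (-(c/2) * t^2)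
      = Real.sqrt (2 * Real.pi) / (2 * c * Real.sqrt c) := by
  have h := integral_rpow_mul_exp_neg_mul_rpow (p := 2) (q := 2) (b := c/2)
    (by norm_num) (by norm_num) (by positivity)
  simp only [Real.rpow_two] at h
  rw [h, show ((2:ℝ) + 1) / 2 = 1/2 + 1 by norm_num, Real.Gamma_add_one (by norm_num),
    Real.Gamma_one_half_eq, show -((2:ℝ) + 1) / 2 = -(1 + 1/2) by norm_num,
    Real.rpow_neg (by positivity), Real.rpow_add (by positivity), Real.rpow_one,
    ← Real.sqrt_eq_rpow, Real.sqrt_div hc.le, Real.sqrt_mul (by norm_num)]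
  field_simp

lemma integrable_gauss_Ioi {c : ℝ} (hc : 0 < c) :
    IntegrableOn (fun t : ℝ => Real.exp (-(c/2) * t^2)) (Ioi 0) :=
  (integrable_exp_neg_mul_sq (half_pos hc)).integrableOn

lemma integrable_sq_gauss_Ioi {c : ℝ} (hc : 0 < c) :
    IntegrableOn (fun t : ℝ => t^2 * Real.exp (-(c/2) * t^2)) (Ioi 0) := by
  have h := integrable_rpow_mul_exp_neg_mul_sq (half_pos hc) (s := 2) (by norm_num)
  simp only [Real.rpow_two] at h
  exact h.integrableOn

/-- Gaussian–Gaussian linear coefficient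
`μ(q) = 1/(2q√(q²+2)) - q/(q²+1)^{3/2}`. -/
theorem stmt18 :
    ∀ q : ℝ, 0 < q →
      (2/q) * ∫ t in Ioi (0:ℝ),
          psiGauss t * ((1 / Real.sqrt (2 * Real.pi)) * Real.exp (-(q*t)^2 / 2))
        = 1 / (2 * q * Real.sqrt (q^2 + 2)) - q / Real.sqrt ((q^2 + 1)^3) := by
  intro q hq
  have ha : 0 < q^2 + 1 := by positivity
  have hb : 0 < q^2 + 2 := by positivity
  have key : ∀ t : ℝ, psiGauss t * ((1 / Real.sqrt (2 * Real.pi)) * Real.exp (-(q*t)^2 / 2))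
      = (1 / Real.sqrt (2 * Real.pi)) *
        (t^2 * Real.exp (-((q^2+1)/2) * t^2) - Real.exp (-((q^2+1)/2) * t^2)
          + (1/2) * Real.exp (-((q^2+2)/2) * t^2)) := by
    intro t
    have h1 : Real.exp (-((q^2+1)/2) * t^2)
        = Real.exp (-t^2 / 2) * Real.exp (-(q*t)^2 / 2) := by
      rw [← Real.exp_add]; congr 1; ring
    have h2 : Real.exp (-((q^2+2)/2) * t^2)
        = Real.exp (-t^2) * Real.exp (-(q*t)^2 / 2) := by
      rw [← Real.exp_add]; congr 1; ring
    rw [psiGauss_eq, h1, h2]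
    ring
  simp only [key]
  have i0 := integrable_gauss_Ioi ha
  have i2 := integrable_sq_gauss_Ioi ha
  have j0 := (integrable_gauss_Ioi hb).const_mul (1/2)
  have d : IntegrableOn (fun t : ℝ =>
      t^2 * Real.exp (-((q^2+1)/2) * t^2) - Real.exp (-((q^2+1)/2) * t^2)) (Ioi 0) := i2.sub i0
  rw [integral_const_mul, integral_add d j0, integral_sub i2 i0, integral_const_mul,
    integral_gauss_Ioi ha, integral_gauss_Ioi hb, integral_sq_gauss_Ioi ha]
  have hs : Real.sqrt ((q^2 + 1)^3) = (q^2 + 1) * Real.sqrt (q^2 + 1) := by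
    rw [pow_succ, Real.sqrt_mul (by positivity), Real.sqrt_sq ha.le]
  rw [hs]
  have hp : 0 < Real.sqrt (2 * Real.pi) := by positivity
  have hA : 0 < Real.sqrt (q^2 + 1) := by positivity
  have hB : 0 < Real.sqrt (q^2 + 2) := by positivity
  -- Treating the square roots as independent atoms makes the identity a rational one.
  generalize Real.sqrt (2 * Real.pi) = P at *
  generalize Real.sqrt (q^2 + 1) = A at *
  generalize Real.sqrt (q^2 + 2) = B at *
  field_simp
  ring
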